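/- With bounded rate kernel λ, for each y ∈ O and initial condition ρ ∈ Δ_y, the ODE dz/dt = F_y(z(t)), z(0) = ρ, admits a unique global solution z ∈ C¹([0, ∞); Δ_y); in particular z(t) remains a probability measure concentrated on h⁻¹(y) for all t ≥ 0. -/

import Mathlib

open MeasureTheory Filter

/-- The total variation norm of a finite signed measure. -/
noncomputable def tvNorm {I : Type*} [MeasurableSpace I] (μ : SignedMeasure I) : ℝ :=
  (μ.totalVariation Set.univ).toReal

/-- Integral of a function against a finite signed measure (via the Jordan decomposition). -/
noncomputable def sInt {I : Type*} [MeasurableSpace I] (ξ : SignedMeasure I) (f : I → ℝ) : ℝ :=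
  (∫ x, f x ∂ξ.toJordanDecomposition.posPart) - ∫ x, f x ∂ξ.toJordanDecomposition.negPart

/-- The vector field `F_y(ν) := B_y ν − ν · (B_y ν)(I)`. -/
noncomputable def Fy {I : Type*} [MeasurableSpace I]
    (B : SignedMeasure I → SignedMeasure I) (ξ : SignedMeasure I) : SignedMeasure I :=
  B ξ - ((B ξ) Set.univ) • ξ

/-- `Δ_y`: probability measures concentrated on `h⁻¹(y)`. -/
def DeltaY {I O : Type*} [MeasurableSpace I] (h : I → O) (y : O) : Set (SignedMeasure I) :=
  {ξ | (∀ A : Set I, MeasurableSet A → 0 ≤ ξ A) ∧ ξ Set.univ = 1 ∧ ξ ((h ⁻¹' {y})ᶜ) = 0}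

/-- `z` has derivative `F_y(z(t))` at `t` from within `[0, ∞)`, in the total variation
norm. -/
def HasTVDerivAt {I : Type*} [MeasurableSpace I]
    (B : SignedMeasure I → SignedMeasure I) (z : ℝ → SignedMeasure I) (t : ℝ) : Prop :=
  Tendsto (fun s => tvNorm (z s - z t - (s - t) • Fy B (z t)) / |s - t|)
    (nhdsWithin t (Set.Ici 0 \ {t})) (nhds 0)

open Topology

section aux
variable {I : Type*} [MeasurableSpace I]

lemma sm_eq_sub (ξ : SignedMeasure I) :
    ξ = ξ.toJordanDecomposition.posPart.toSignedMeasure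
      - ξ.toJordanDecomposition.negPart.toSignedMeasure :=
  (ξ.toSignedMeasure_toJordanDecomposition).symm

lemma tv_eq (ξ : SignedMeasure I) : tvNorm ξ =
    ξ.toJordanDecomposition.posPart.real Set.univ + ξ.toJordanDecomposition.negPart.real Set.univ := by
  simp only [tvNorm, SignedMeasure.totalVariation, Measure.real, Measure.add_apply]
  rw [ENNReal.toReal_add (by simp) (by simp)]

lemma tv_nonneg (ξ : SignedMeasure I) : 0 ≤ tvNorm ξ := ENNReal.toReal_nonneg

lemma abs_apply_le_tv (ξ : SignedMeasure I) (A : Set I) : |ξ A| ≤ tvNorm ξ := by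
  by_cases hA : MeasurableSet A
  · rw [ξ.apply_eq_posPart_real_sub_negPart_real hA, tv_eq]
    have h1 := measureReal_mono (μ := ξ.toJordanDecomposition.posPart) (Set.subset_univ A)
    have h2 := measureReal_mono (μ := ξ.toJordanDecomposition.negPart) (Set.subset_univ A)
    have h3 := measureReal_nonneg (μ := ξ.toJordanDecomposition.posPart) (s := A)
    have h4 := measureReal_nonneg (μ := ξ.toJordanDecomposition.negPart) (s := A)
    rw [abs_le]; constructor <;> linarith
  · rw [ξ.not_measurable hA]; simpa using tv_nonneg ξ

lemma exists_tv (ξ : SignedMeasure I) : ∃ P : Set I, tvNorm ξ ≤ |ξ P| + |ξ Pᶜ| := by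
  obtain ⟨P, hP, h1, h2, h3, h4⟩ := ξ.toJordanDecomposition_spec
  refine ⟨P, ?_⟩
  rw [tv_eq, h3, h4]
  simp only [Measure.real]
  rw [SignedMeasure.toMeasureOfZeroLE_apply _ _ hP MeasurableSet.univ,
    SignedMeasure.toMeasureOfLEZero_apply _ _ hP.compl MeasurableSet.univ]
  simp only [Set.inter_univ, ENNReal.coe_toReal]
  exact add_le_add (le_abs_self _) (neg_le_abs _)

lemma sm_mem (ξ : SignedMeasure I) : Memℓp (fun A : Set I => ξ A) ⊤ := by
  refine memℓp_infty ⟨tvNorm ξ, ?_⟩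
  rintro _ ⟨A, rfl⟩
  exact abs_apply_le_tv ξ A

/-- embedding -/
noncomputable def smEmb (I : Type*) [MeasurableSpace I] :
    SignedMeasure I →ₗ[ℝ] lp (fun _ : Set I => ℝ) ⊤ where
  toFun ξ := ⟨fun A => ξ A, sm_mem ξ⟩
  map_add' _ _ := rfl
  map_smul' _ _ := rfl

lemma smEmb_inj : Function.Injective (smEmb I) := by
  intro a b hab
  ext A _
  exact congrArg (fun f : lp (fun _ : Set I => ℝ) ⊤ => f A) hab

noncomputable instance smNACG : NormedAddCommGroup (SignedMeasure I) :=
  NormedAddCommGroup.induced _ _ (smEmb I) smEmb_inj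

noncomputable instance smNS : NormedSpace ℝ (SignedMeasure I) :=
  NormedSpace.induced ℝ _ _ (smEmb I)

lemma abs_apply_le (ξ : SignedMeasure I) (A : Set I) : |ξ A| ≤ ‖ξ‖ :=
  lp.norm_apply_le_norm (by simp) (smEmb I ξ) A

lemma sm_norm_le (ξ : SignedMeasure I) {c : ℝ} (hc : 0 ≤ c) (h : ∀ A, MeasurableSet A → |ξ A| ≤ c) :
    ‖ξ‖ ≤ c := by
  refine lp.norm_le_of_forall_le (f := smEmb I ξ) hc fun A => ?_
  by_cases hA : MeasurableSet A
  · exact h A hA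
  · change |ξ A| ≤ c
    rw [ξ.not_measurable hA]; simpa

lemma norm_le_tv (ξ : SignedMeasure I) : ‖ξ‖ ≤ tvNorm ξ :=
  sm_norm_le ξ (tv_nonneg ξ) fun A _ => abs_apply_le_tv ξ A

lemma tv_le_norm (ξ : SignedMeasure I) : tvNorm ξ ≤ 2 * ‖ξ‖ := by
  obtain ⟨P, hP⟩ := exists_tv ξ
  linarith [abs_apply_le ξ P, abs_apply_le ξ Pᶜ]

/-- evaluation -/
noncomputable def evA (A : Set I) : SignedMeasure I →L[ℝ] ℝ :=
  LinearMap.mkContinuous ⟨⟨fun ξ => ξ A, fun _ _ => rfl⟩, fun _ _ => rfl⟩ 1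
    (fun ξ => by rw [one_mul]; exact abs_apply_le ξ A)

@[simp] lemma evA_apply (A : Set I) (ξ : SignedMeasure I) : evA A ξ = ξ A := rfl

instance smComplete : CompleteSpace (SignedMeasure I) := by
  have hi : Isometry (smEmb I) := AddMonoidHomClass.isometry_of_norm _ fun _ => rfl
  rw [completeSpace_iff_isComplete_range hi.isUniformInducing]
  refine IsClosed.isComplete (isClosed_of_closure_subset ?_)
  intro g hg
  rw [Metric.mem_closure_iff] at hg
  have key : ∀ ε > 0, ∃ ξ : SignedMeasure I, ∀ A, |g A - ξ A| < ε := by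
    intro ε hε
    obtain ⟨_, ⟨ξ, rfl⟩, h⟩ := hg ε hε
    refine ⟨ξ, fun A => lt_of_le_of_lt ?_ h⟩
    rw [dist_eq_norm]
    exact lp.norm_apply_le_norm (by simp) (g - smEmb I ξ) A
  have eq0 : ∀ x : ℝ, (∀ ε > 0, |x| < ε) → x = 0 := by
    intro x hx
    by_contra h0
    exact lt_irrefl _ (hx _ (abs_pos.2 h0))
  refine ⟨⟨fun A => g A, ?_, ?_, ?_⟩, ?_⟩
  · refine eq0 _ fun ε hε => ?_
    obtain ⟨ξ, h⟩ := key ε hε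
    simpa using h ∅
  · intro A hA
    refine eq0 _ fun ε hε => ?_
    obtain ⟨ξ, h⟩ := key ε hε
    simpa [ξ.not_measurable hA] using h A
  · intro f hf hd
    have hfin : ∀ s : Finset ℕ, ∑ i ∈ s, g (f i) = g (⋃ i ∈ s, f i) := by
      intro s
      rw [← sub_eq_zero]
      refine eq0 _ fun ε hε => ?_
      have hpos : (0:ℝ) < s.card + 1 := by positivity
      obtain ⟨ξ, h⟩ := key (ε / (s.card + 1)) (by positivity)
      have e : ξ (⋃ i ∈ s, f i) = ∑ i ∈ s, ξ (f i) :=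
        ξ.of_biUnion_finset (fun i _ j _ hij => hd hij) (fun i _ => hf i)
      have e2 : ∑ i ∈ s, g (f i) - g (⋃ i ∈ s, f i) =
          ∑ i ∈ s, (g (f i) - ξ (f i)) - (g (⋃ i ∈ s, f i) - ξ (⋃ i ∈ s, f i)) := by
        rw [Finset.sum_sub_distrib, e]; ring
      rw [e2]
      have h3 : |∑ i ∈ s, (g (f i) - ξ (f i))| ≤ s.card * (ε / (s.card + 1)) := by
        refine (Finset.abs_sum_le_sum_abs _ _).trans ?_
        refine (Finset.sum_le_sum (fun i _ => (h (f i)).le)).trans ?_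
        simp
      refine lt_of_le_of_lt (abs_sub _ _) ?_
      calc _ < s.card * (ε / (s.card + 1)) + ε / (s.card + 1) := add_lt_add_of_le_of_lt h3 (h _)
        _ = ε := by field_simp
    change Tendsto (fun s : Finset ℕ => ∑ i ∈ s, g (f i)) _ _
    rw [Metric.tendsto_nhds]
    intro ε hε
    obtain ⟨ξ, h⟩ := key (ε / 3) (by positivity)
    have hs := ξ.m_iUnion hf hd
    have hs' : Tendsto (fun s : Finset ℕ => ∑ i ∈ s, ξ (f i)) atTop (𝓝 (ξ (⋃ i, f i))) := hs
    rw [Metric.tendsto_nhds] at hs'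
    filter_upwards [hs' (ε / 3) (by positivity)] with s hs
    have e : ξ (⋃ i ∈ s, f i) = ∑ i ∈ s, ξ (f i) :=
        ξ.of_biUnion_finset (fun i _ j _ hij => hd hij) (fun i _ => hf i)
    rw [hfin]
    rw [← e] at hs
    rw [Real.dist_eq, abs_lt] at *
    have a1 := abs_lt.1 (h (⋃ i ∈ s, f i))
    have a2 := abs_lt.1 (h (⋃ i, f i))
    constructor <;> linarith [a1.1, a1.2, a2.1, a2.2, hs.1, hs.2]
  · rfl

lemma sInt_sub_eq (ξ : SignedMeasure I) (μ ν : Measure I) [IsFiniteMeasure μ] [IsFiniteMeasure ν]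
    (h : ξ = μ.toSignedMeasure - ν.toSignedMeasure) {f : I → ℝ} (hf : Measurable f) {M : ℝ}
    (hM : ∀ x, |f x| ≤ M) : sInt ξ f = ∫ x, f x ∂μ - ∫ x, f x ∂ν := by
  have hint : ∀ (m : Measure I) [IsFiniteMeasure m], Integrable f m := fun m _ =>
    Integrable.of_bound hf.aestronglyMeasurable M (Eventually.of_forall hM)
  have h1 := sm_eq_sub ξ
  have h2 : ξ.toJordanDecomposition.posPart + ν = μ + ξ.toJordanDecomposition.negPart := by
    rw [← Measure.toSignedMeasure_eq_toSignedMeasure_iff, Measure.toSignedMeasure_add,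
      Measure.toSignedMeasure_add]
    rw [h1] at h
    exact sub_eq_sub_iff_add_eq_add.1 h
  have h3 : ∫ x, f x ∂(ξ.toJordanDecomposition.posPart + ν)
      = ∫ x, f x ∂(μ + ξ.toJordanDecomposition.negPart) := by rw [h2]
  rw [integral_add_measure (hint _) (hint _), integral_add_measure (hint _) (hint _)] at h3
  simp only [sInt]
  linarith

lemma sInt_add (ξ η : SignedMeasure I) {f : I → ℝ} (hf : Measurable f) {M : ℝ}
    (hM : ∀ x, |f x| ≤ M) : sInt (ξ + η) f = sInt ξ f + sInt η f := by
  have hint : ∀ (m : Measure I) [IsFiniteMeasure m], Integrable f m := fun m _ =>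
    Integrable.of_bound hf.aestronglyMeasurable M (Eventually.of_forall hM)
  rw [sInt_sub_eq (ξ + η)
    (ξ.toJordanDecomposition.posPart + η.toJordanDecomposition.posPart)
    (ξ.toJordanDecomposition.negPart + η.toJordanDecomposition.negPart) ?_ hf hM]
  · rw [integral_add_measure (hint _) (hint _), integral_add_measure (hint _) (hint _)]
    simp only [sInt]; ring
  · rw [Measure.toSignedMeasure_add, Measure.toSignedMeasure_add]
    conv_lhs => rw [sm_eq_sub ξ, sm_eq_sub η]
    abel

lemma abs_sInt_le (ξ : SignedMeasure I) {f : I → ℝ} {M : ℝ}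
    (hM : ∀ x, |f x| ≤ M) : |sInt ξ f| ≤ M * tvNorm ξ := by
  have h1 : ∀ (m : Measure I) [IsFiniteMeasure m], |∫ x, f x ∂m| ≤ M * m.real Set.univ :=
    fun m _ => norm_integral_le_of_norm_le_const (f := f) (μ := m) (Eventually.of_forall hM)
  rw [tv_eq, mul_add]
  exact (abs_sub _ _).trans (add_le_add (h1 _) (h1 _))

lemma hasTVDerivAt_iff (B : SignedMeasure I → SignedMeasure I) (z : ℝ → SignedMeasure I) (t : ℝ) :
    HasTVDerivAt B z t ↔ HasDerivWithinAt z (Fy B (z t)) (Set.Ici 0) t := by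
  rw [← hasDerivWithinAt_sdiff_singleton, hasDerivWithinAt_iff_tendsto, HasTVDerivAt]
  constructor
  · intro h
    refine squeeze_zero (fun s => by positivity) (fun s => ?_) h
    rw [div_eq_inv_mul, Real.norm_eq_abs]
    gcongr
    exact norm_le_tv _
  · intro h
    refine squeeze_zero (fun s => div_nonneg (tv_nonneg _) (abs_nonneg _)) (fun s => ?_)
      (by simpa using h.const_mul 2)
    rw [div_eq_inv_mul, mul_left_comm]
    gcongr
    exact tv_le_norm _

end aux

section aux2
variable {I O : Type*} [MeasurableSpace I]

lemma exists_meas (ξ : SignedMeasure I) (hξ : ∀ A, MeasurableSet A → 0 ≤ ξ A) :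
    ∃ μ : Measure I, ∃ _ : IsFiniteMeasure μ, ξ = μ.toSignedMeasure := by
  have h0 : 0 ≤[Set.univ] ξ := by
    rw [VectorMeasure.le_restrict_univ_iff_le]
    intro A hA
    exact hξ A hA
  exact ⟨ξ.toMeasureOfZeroLE Set.univ .univ h0, inferInstance,
    (SignedMeasure.toMeasureOfZeroLE_toSignedMeasure ξ h0).symm⟩

variable (κ : ProbabilityTheory.Kernel I I) (C : ℝ)
    (hC : ∀ x, κ x Set.univ ≤ ENNReal.ofReal C)

include hC in
lemma kernel_bound (x : I) (A : Set I) : (κ x A).toReal ≤ max C 0 := by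
  have h1 : κ x A ≤ ENNReal.ofReal C := (measure_mono (Set.subset_univ A)).trans (hC x)
  have := ENNReal.toReal_mono ENNReal.ofReal_ne_top h1
  rwa [ENNReal.toReal_ofReal'] at this

include hC in
lemma kernel_abs (x : I) (A : Set I) : |(κ x A).toReal| ≤ max C 0 := by
  rw [abs_of_nonneg ENNReal.toReal_nonneg]; exact kernel_bound κ C hC x A

include hC in
lemma kernel_ind_abs (A : Set I) (x : I) :
    |Set.indicator A (fun z => (κ z Set.univ).toReal) x| ≤ max C 0 := by
  by_cases hx : x ∈ A
  · rw [Set.indicator_of_mem hx]; exact kernel_abs κ C hC x _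
  · rw [Set.indicator_of_notMem hx]; simp

lemma kernel_meas (A : Set I) (hA : MeasurableSet A) : Measurable (fun x => (κ x A).toReal) :=
  (κ.measurable_coe hA).ennreal_toReal

variable (S : Set I) (hS : MeasurableSet S)
    (B : SignedMeasure I → SignedMeasure I)
    (hB : ∀ (ξ : SignedMeasure I) (A : Set I), MeasurableSet A →
      B ξ A = sInt ξ (fun x => (κ x (A ∩ S)).toReal)
              - sInt ξ (Set.indicator A fun z => (κ z Set.univ).toReal))

include hC hS hB in
lemma exists_clm : ∃ L : SignedMeasure I →L[ℝ] SignedMeasure I, ∀ ξ, L ξ = B ξ := by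
  have hadd : ∀ ξ η, B (ξ + η) = B ξ + B η := by
    intro ξ η
    ext A hA
    rw [_root_.add_apply, hB _ A hA, hB _ A hA, hB _ A hA,
      sInt_add ξ η (kernel_meas κ _ (hA.inter hS)) (fun x => kernel_abs κ C hC x _),
      sInt_add ξ η ((kernel_meas κ _ .univ).indicator hA) (kernel_ind_abs κ C hC A)]
    ring
  have hbd : ∀ ξ, ‖B ξ‖ ≤ (4 * max C 0) * ‖ξ‖ := by
    intro ξ
    have h0 : 0 ≤ max C 0 := le_max_right _ _
    refine sm_norm_le _ (by positivity) fun A hA => ?_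
    rw [hB _ A hA]
    have h1 := abs_sInt_le ξ (fun x => kernel_abs κ C hC x (A ∩ S))
    have h2 := abs_sInt_le ξ (kernel_ind_abs κ C hC A)
    have h3 := mul_le_mul_of_nonneg_left (tv_le_norm ξ) h0
    refine (abs_sub _ _).trans ?_
    linarith
  let f : SignedMeasure I →+ SignedMeasure I := AddMonoidHom.mk' B hadd
  exact ⟨f.toRealLinearMap (AddMonoidHomClass.continuous_of_bound f _ hbd), fun ξ => rfl⟩

/-- cone -/
def coneS (S : Set I) : Set (SignedMeasure I) :=
  {ξ | (∀ A : Set I, MeasurableSet A → 0 ≤ ξ A) ∧ ξ Sᶜ = 0}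

include hC hS hB in
lemma cone_step (ξ : SignedMeasure I) (hξ : ξ ∈ coneS S) : B ξ + (max C 0) • ξ ∈ coneS S := by
  obtain ⟨μ, hμ, rfl⟩ := exists_meas ξ hξ.1
  have hval : ∀ A, MeasurableSet A → (B μ.toSignedMeasure + (max C 0) • μ.toSignedMeasure) A =
      ∫ x, (κ x (A ∩ S)).toReal ∂μ - ∫ x in A, (κ x Set.univ).toReal ∂μ + max C 0 * μ.real A := by
    intro A hA
    rw [_root_.add_apply, _root_.smul_apply, hB _ A hA,
      sInt_sub_eq μ.toSignedMeasure μ 0 (by simp) (kernel_meas κ _ (hA.inter hS))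
        (fun x => kernel_abs κ C hC x _),
      sInt_sub_eq μ.toSignedMeasure μ 0 (by simp) ((kernel_meas κ _ .univ).indicator hA)
        (kernel_ind_abs κ C hC A), integral_indicator hA,
      Measure.toSignedMeasure_apply_measurable hA]
    simp
  refine ⟨fun A hA => ?_, ?_⟩
  · rw [hval A hA]
    have h1 : 0 ≤ ∫ x, (κ x (A ∩ S)).toReal ∂μ := integral_nonneg fun x => ENNReal.toReal_nonneg
    have h2 : ‖∫ x in A, (κ x Set.univ).toReal ∂μ‖ ≤ max C 0 * μ.real A :=
      norm_setIntegral_le_of_norm_le_const (measure_lt_top μ A)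
        (fun x _ => kernel_abs κ C hC x _)
    have := (le_abs_self _).trans h2
    linarith
  · rw [hval _ hS.compl]
    have h0 := hξ.2
    rw [Measure.toSignedMeasure_apply_measurable hS.compl] at h0
    have h1 : μ Sᶜ = 0 := by simpa [Measure.real, ENNReal.toReal_eq_zero_iff] using h0
    rw [h0, Measure.restrict_eq_zero.2 h1]
    simp

lemma exp_cone (L : SignedMeasure I →L[ℝ] SignedMeasure I)
    (hL : ∀ ξ ∈ coneS S, L ξ ∈ coneS S) (ρ : SignedMeasure I) (hρ : ρ ∈ coneS S) (t : ℝ)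
    (ht : 0 ≤ t) :
    NormedSpace.exp (t • L) ρ ∈ coneS S ∧ ρ Set.univ ≤ NormedSpace.exp (t • L) ρ Set.univ := by
  have hpow : ∀ n : ℕ, (L ^ n) ρ ∈ coneS S := by
    intro n
    induction n with
    | zero => simpa using hρ
    | succ n ih => rw [pow_succ']; exact hL _ ih
  have hs : ∀ A, HasSum (fun n : ℕ => ((n.factorial : ℝ)⁻¹ * t ^ n) * (L ^ n) ρ A)
      (NormedSpace.exp (t • L) ρ A) := by
    intro A
    have h1 := NormedSpace.exp_series_hasSum_exp' (𝕂 := ℝ) (t • L)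
    have h2 := ((evA A).comp (ContinuousLinearMap.apply ℝ (SignedMeasure I) ρ)).hasSum h1
    convert h2 using 2 with n
    · simp [smul_pow, mul_assoc]
    · rfl
  have hnn : ∀ A, MeasurableSet A → ∀ n : ℕ,
      0 ≤ ((n.factorial : ℝ)⁻¹ * t ^ n) * (L ^ n) ρ A := fun A hA n =>
    mul_nonneg (by positivity) ((hpow n).1 A hA)
  refine ⟨⟨fun A hA => (hs A).nonneg (hnn A hA), ?_⟩, ?_⟩
  · have := hs Sᶜ
    simp only [(hpow _).2, mul_zero] at this
    exact this.unique hasSum_zero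
  · have := le_hasSum (hs Set.univ) 0 (fun n _ => hnn _ .univ n)
    simpa using this

lemma Fy_lip (L : SignedMeasure I →L[ℝ] SignedMeasure I) (hL : ∀ ξ, L ξ = B ξ) (h : I → O) (y : O) :
    LipschitzOnWith (3 * ‖L‖₊) (Fy B) (DeltaY h y) := by
  have hn : ∀ ξ ∈ DeltaY h y, ‖ξ‖ ≤ 1 := by
    intro ξ hξ
    refine sm_norm_le ξ zero_le_one fun A hA => ?_
    rw [abs_of_nonneg (hξ.1 A hA), ← hξ.2.1,
      ← VectorMeasure.of_add_of_sdiff hA .univ (Set.subset_univ A)]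
    have := hξ.1 (Set.univ \ A) (MeasurableSet.univ.diff hA)
    linarith
  refine LipschitzOnWith.of_dist_le_mul fun ξ hξ η hη => ?_
  rw [dist_eq_norm, dist_eq_norm]
  have e : Fy B ξ - Fy B η = L (ξ - η) - (L ξ Set.univ) • (ξ - η)
      - (L (ξ - η) Set.univ) • η := by
    simp only [Fy, ← hL, map_sub, _root_.sub_apply, smul_sub, sub_smul]
    abel
  rw [e]
  have h1 := L.le_opNorm (ξ - η)
  have h2 : ‖(L ξ Set.univ) • (ξ - η)‖ ≤ ‖L‖ * ‖ξ - η‖ := by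
    rw [norm_smul]
    gcongr
    refine (abs_apply_le _ _).trans ((L.le_opNorm ξ).trans ?_)
    exact mul_le_of_le_one_right (norm_nonneg _) (hn ξ hξ)
  have h3 : ‖(L (ξ - η) Set.univ) • η‖ ≤ ‖L‖ * ‖ξ - η‖ := by
    rw [norm_smul]
    refine (mul_le_of_le_one_right (norm_nonneg _) (hn η hη)).trans ?_
    exact (abs_apply_le _ _).trans h1
  have h4 := norm_sub_le (L (ξ - η) - (L ξ Set.univ) • (ξ - η)) ((L (ξ - η) Set.univ) • η)
  have h5 := norm_sub_le (L (ξ - η)) ((L ξ Set.univ) • (ξ - η))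
  simp only [NNReal.coe_mul, NNReal.coe_ofNat, coe_nnnorm]
  linarith

end aux2

/-- With bounded rate kernel, for each `y ∈ O` and initial condition `ρ ∈ Δ_y`, the ODE
`dz/dt = F_y(z(t))`, `z(0) = ρ` admits a unique global solution in `C¹([0,∞); Δ_y)`:
in particular `z(t)` remains a probability measure concentrated on `h⁻¹(y)` for all
`t ≥ 0`. -/
theorem ode_unique_global_solution {I O : Type*}
    [MetricSpace I] [MeasurableSpace I] [BorelSpace I]
    [SecondCountableTopology I] [CompleteSpace I]
    [MetricSpace O] [MeasurableSpace O] [BorelSpace O]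
    [SecondCountableTopology O] [CompleteSpace O]
    (h : I → O) (hh : Measurable h)
    (κ : ProbabilityTheory.Kernel I I) (hdiag : ∀ x, κ x {x} = 0)
    (C : ℝ) (hC : ∀ x, κ x Set.univ ≤ ENNReal.ofReal C)
    (y : O) (B : SignedMeasure I → SignedMeasure I)
    (hB : ∀ (ξ : SignedMeasure I) (A : Set I), MeasurableSet A →
      B ξ A = sInt ξ (fun x => (κ x (A ∩ h ⁻¹' {y})).toReal)
              - sInt ξ (Set.indicator A fun z => (κ z Set.univ).toReal))
    (ρ : SignedMeasure I) (hρ : ρ ∈ DeltaY h y) :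
    ∃ z : ℝ → SignedMeasure I,
      (z 0 = ρ ∧ (∀ t : ℝ, 0 ≤ t → z t ∈ DeltaY h y) ∧
        (∀ t : ℝ, 0 ≤ t → HasTVDerivAt B z t)) ∧
      ∀ w : ℝ → SignedMeasure I,
        (w 0 = ρ ∧ (∀ t : ℝ, 0 ≤ t → w t ∈ DeltaY h y) ∧
          (∀ t : ℝ, 0 ≤ t → HasTVDerivAt B w t)) →
        ∀ t : ℝ, 0 ≤ t → w t = z t := by
  have hS : MeasurableSet (h ⁻¹' {y}) := hh (measurableSet_singleton y)
  obtain ⟨L, hL⟩ := exists_clm κ C hC (h ⁻¹' {y}) hS B hB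
  let M : ℝ := max C 0
  let T : SignedMeasure I →L[ℝ] SignedMeasure I := L + M • ContinuousLinearMap.id ℝ _
  have hT : ∀ ξ, T ξ = B ξ + M • ξ := fun ξ => by simp [T, hL]
  have hcone : ∀ ξ ∈ coneS (h ⁻¹' {y}), T ξ ∈ coneS (h ⁻¹' {y}) := fun ξ hξ => by
    rw [hT]; exact cone_step κ C hC _ hS B hB ξ hξ
  let u : ℝ → SignedMeasure I := fun t => NormedSpace.exp (t • T) ρ
  have hu : ∀ t, 0 ≤ t → u t ∈ coneS (h ⁻¹' {y}) ∧ ρ Set.univ ≤ u t Set.univ := fun t ht =>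
    exp_cone _ T hcone ρ ⟨hρ.1, hρ.2.2⟩ t ht
  have hpos : ∀ t, 0 ≤ t → 0 < u t Set.univ := fun t ht => by
    have := (hu t ht).2
    rw [hρ.2.1] at this
    linarith
  have hud : ∀ t, HasDerivAt u (T (u t)) t := fun t =>
    ((ContinuousLinearMap.apply ℝ (SignedMeasure I) ρ).hasFDerivAt.comp_hasDerivAt t
      (hasDerivAt_exp_smul_const' T t))
  have hmd : ∀ t, HasDerivAt (fun t => u t Set.univ) (T (u t) Set.univ) t := fun t =>
    (evA Set.univ).hasFDerivAt.comp_hasDerivAt t (hud t)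
  let z : ℝ → SignedMeasure I := fun t => (u t Set.univ)⁻¹ • u t
  have hz0 : z 0 = ρ := by simp [z, u, hρ.2.1]
  have hzD : ∀ t : ℝ, 0 ≤ t → z t ∈ DeltaY h y := fun t ht => by
    refine ⟨fun A hA => ?_, ?_, ?_⟩
    · exact mul_nonneg (inv_nonneg.2 (hpos t ht).le) ((hu t ht).1.1 A hA)
    · exact inv_mul_cancel₀ (hpos t ht).ne'
    · change (u t Set.univ)⁻¹ * u t (h ⁻¹' {y})ᶜ = 0
      rw [(hu t ht).1.2, mul_zero]
  have hzd : ∀ t : ℝ, 0 ≤ t → HasDerivWithinAt z (Fy B (z t)) (Set.Ici 0) t := fun t ht => by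
    have h1 := ((hmd t).inv (hpos t ht).ne').smul (hud t)
    refine HasDerivAt.hasDerivWithinAt (h1.congr_deriv ?_)
    have hm := (hpos t ht).ne'
    have hTu : T (u t) = L (u t) + M • u t := by rw [hT, hL]
    simp only [Fy, ← hL, z, map_smul, hTu, Pi.inv_apply]
    ext A hA
    simp only [_root_.add_apply, _root_.sub_apply, _root_.smul_apply, smul_eq_mul]
    field_simp
    ring
  refine ⟨z, ⟨hz0, hzD, fun t ht => (hasTVDerivAt_iff B z t).2 (hzd t ht)⟩, ?_⟩
  rintro w ⟨hw0, hwD, hw⟩ t ht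
  have hwd : ∀ t : ℝ, 0 ≤ t → HasDerivWithinAt w (Fy B (w t)) (Set.Ici 0) t := fun t ht =>
    (hasTVDerivAt_iff B w t).1 (hw t ht)
  refine ODE_solution_unique_of_mem_Icc_right (v := fun _ => Fy B) (s := fun _ => DeltaY h y)
    (K := 3 * ‖L‖₊) (a := 0) (b := t)
    (fun _ _ => Fy_lip B L hL h y) ?_ ?_ ?_ ?_ ?_ ?_ (hw0.trans hz0.symm) ⟨ht, le_rfl⟩
  · exact fun s hs => (hwd s hs.1).continuousWithinAt.mono (fun r hr => hr.1)
  · exact fun s hs => (hwd s hs.1).mono (Set.Ici_subset_Ici.2 hs.1)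
  · exact fun s hs => hwD s hs.1
  · exact fun s hs => (hzd s hs.1).continuousWithinAt.mono (fun r hr => hr.1)
  · exact fun s hs => (hzd s hs.1).mono (Set.Ici_subset_Ici.2 hs.1)
  · exact fun s hs => hzD s hs.1
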